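/- The spectral gap satisfies λ^G_{π,ν} ≥ max_{0 ≤ i ≤ n} min{ (Σ_{j=0}^{i−1} π([0,j])/ν(j,j+1))^{−1}, (Σ_{j=i+1}^{n} π([j,n])/ν(j−1,j))^{−1} }, where π([a,b]) = Σ_{k=a}^{b} π(k), empty sums are 0, and the reciprocal of 0 is interpreted as +∞ (i.e. for i = 0 only the second term constrains, and for i = n only the first). -/

import Mathlib

open Finset

/-- Dirichlet form on the path with vertices `{0,1,…,n}`;
`ν i` denotes the weight of edge `{i, i+1}` for `0 ≤ i ≤ n−1`. -/
noncomputable def EForm (n : ℕ) (ν : ℕ → ℝ) (f g : ℕ → ℝ) : ℝ :=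
  ∑ i ∈ Finset.range n, (f i - f (i + 1)) * (g i - g (i + 1)) * ν i

/-- Mean of `f` with respect to `π` on `{0,…,n}`. -/
noncomputable def piMean (n : ℕ) (π : ℕ → ℝ) (f : ℕ → ℝ) : ℝ :=
  ∑ i ∈ Finset.range (n + 1), f i * π i

/-- Variance of `f` with respect to `π` on `{0,…,n}`. -/
noncomputable def varPi (n : ℕ) (π : ℕ → ℝ) (f : ℕ → ℝ) : ℝ :=
  piMean n π (fun i => (f i) ^ 2) - (piMean n π f) ^ 2

/-- `f` is non-constant on `{0,…,n}`. -/
def Nonconstant (n : ℕ) (f : ℕ → ℝ) : Prop :=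
  ∃ i ∈ Finset.range (n + 1), ∃ j ∈ Finset.range (n + 1), f i ≠ f j

/-- `lam` is the spectral gap: the minimum of the Rayleigh quotients over
non-constant functions on `{0,…,n}`. -/
def IsSpectralGap (n : ℕ) (π ν : ℕ → ℝ) (lam : ℝ) : Prop :=
  IsLeast {r : ℝ | ∃ f : ℕ → ℝ, Nonconstant n f ∧ r = EForm n ν f f / varPi n π f} lam

lemma cs_path (ν f : ℕ → ℝ) (a b : ℕ) (hab : a ≤ b) (hν : ∀ j ∈ Finset.Ico a b, 0 < ν j) :
    (f a - f b) ^ 2 ≤ (∑ j ∈ Finset.Ico a b, 1 / ν j) *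
      ∑ j ∈ Finset.Ico a b, (f j - f (j + 1)) * (f j - f (j + 1)) * ν j := by
  have h1 : f a - f b = ∑ j ∈ Finset.Ico a b, (f j - f (j + 1)) := by
    induction b, hab using Nat.le_induction with
    | base => simp
    | succ b hab ih =>
      rw [Finset.sum_Ico_succ_top hab, ← ih]
      · ring
      · intro j hj
        apply hν
        simp only [Finset.mem_Ico] at hj ⊢
        omega
  rw [h1]
  apply Finset.sum_sq_le_sum_mul_sum_of_sq_le_mul
  · intro j hj
    have := hν j hj
    positivity
  · intro j hj
    have := hν j hj
    exact mul_nonneg (mul_self_nonneg _) this.le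
  · intro j hj
    have := hν j hj
    exact le_of_eq (by field_simp)

lemma left_bound (π ν f : ℕ → ℝ) (i : ℕ) (hπ : ∀ k < i, 0 < π k) (hν : ∀ j < i, 0 < ν j) :
    ∑ k ∈ Finset.range i, π k * (f k - f i) ^ 2 ≤
      (∑ j ∈ Finset.range i, (∑ k ∈ Finset.range (j + 1), π k) / ν j) *
      ∑ j ∈ Finset.range i, (f j - f (j + 1)) * (f j - f (j + 1)) * ν j := by
  have hsw : ∑ j ∈ Finset.range i, (∑ k ∈ Finset.range (j + 1), π k) / ν j =
      ∑ k ∈ Finset.range i, π k * ∑ j ∈ Finset.Ico k i, 1 / ν j := by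
    simp_rw [Finset.sum_div, Finset.mul_sum, mul_one_div]
    apply Finset.sum_comm'
    intro x y
    simp only [Finset.mem_range, Finset.mem_Ico]
    omega
  rw [hsw, Finset.sum_mul]
  apply Finset.sum_le_sum
  intro k hk
  rw [Finset.mem_range] at hk
  rw [mul_assoc]
  apply mul_le_mul_of_nonneg_left _ (hπ k hk).le
  have hν' : ∀ j ∈ Finset.Ico k i, 0 < ν j := fun j hj => hν j (Finset.mem_Ico.1 hj).2
  refine (cs_path ν f k i hk.le hν').trans ?_
  apply mul_le_mul_of_nonneg_left
  · apply Finset.sum_le_sum_of_subset_of_nonneg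
    · intro j hj
      simp only [Finset.mem_Ico, Finset.mem_range] at hj ⊢
      omega
    · intro j hj _
      exact mul_nonneg (mul_self_nonneg _) (hν j (Finset.mem_range.1 hj)).le
  · apply Finset.sum_nonneg
    intro j hj
    exact (one_div_pos.2 (hν' j hj)).le

lemma right_bound (n : ℕ) (π ν f : ℕ → ℝ) (i : ℕ) (hπ : ∀ k ≤ n, 0 < π k)
    (hν : ∀ j < n, 0 < ν j) :
    ∑ k ∈ Finset.Ico (i + 1) (n + 1), π k * (f k - f i) ^ 2 ≤
      (∑ j ∈ Finset.Icc (i + 1) n, (∑ k ∈ Finset.Icc j n, π k) / ν (j - 1)) *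
      ∑ j ∈ Finset.Ico i n, (f j - f (j + 1)) * (f j - f (j + 1)) * ν j := by
  have hsw : ∑ j ∈ Finset.Icc (i + 1) n, (∑ k ∈ Finset.Icc j n, π k) / ν (j - 1) =
      ∑ k ∈ Finset.Ico (i + 1) (n + 1), π k * ∑ j ∈ Finset.Ico i k, 1 / ν j := by
    have h2 : ∀ k, ∑ j ∈ Finset.Ico i k, 1 / ν j =
        ∑ j ∈ Finset.Ico (i + 1) (k + 1), 1 / ν (j - 1) := by
      intro k
      rw [← Finset.sum_Ico_add' (fun j => 1 / ν (j - 1)) i k 1]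
      simp
    simp_rw [h2, Finset.sum_div, Finset.mul_sum, mul_one_div]
    apply Finset.sum_comm'
    intro x y
    simp only [Finset.mem_Icc, Finset.mem_Ico]
    omega
  rw [hsw, Finset.sum_mul]
  apply Finset.sum_le_sum
  intro k hk
  rw [Finset.mem_Ico] at hk
  rw [mul_assoc]
  apply mul_le_mul_of_nonneg_left _ (hπ k (by omega)).le
  have hν' : ∀ j ∈ Finset.Ico i k, 0 < ν j := fun j hj => hν j (by
    have := (Finset.mem_Ico.1 hj).2
    omega)
  have hsq : (f k - f i) ^ 2 = (f i - f k) ^ 2 := by ring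
  rw [hsq]
  refine (cs_path ν f i k (by omega) hν').trans ?_
  apply mul_le_mul_of_nonneg_left
  · apply Finset.sum_le_sum_of_subset_of_nonneg
    · intro j hj
      simp only [Finset.mem_Ico] at hj ⊢
      omega
    · intro j hj _
      exact mul_nonneg (mul_self_nonneg _) (hν j (Finset.mem_Ico.1 hj).2).le
  · apply Finset.sum_nonneg
    intro j hj
    exact (one_div_pos.2 (hν' j hj)).le

lemma var_shift (n : ℕ) (π f : ℕ → ℝ) (hπ1 : ∑ i ∈ Finset.range (n + 1), π i = 1) (c : ℝ) :
    ∑ k ∈ Finset.range (n + 1), π k * (f k - c) ^ 2 =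
      varPi n π f + (piMean n π f - c) ^ 2 := by
  have h : ∑ k ∈ Finset.range (n + 1), π k * (f k - c) ^ 2 =
      piMean n π (fun i => (f i) ^ 2) - 2 * c * piMean n π f +
        c ^ 2 * ∑ i ∈ Finset.range (n + 1), π i := by
    unfold piMean
    rw [Finset.mul_sum, Finset.mul_sum, ← Finset.sum_sub_distrib, ← Finset.sum_add_distrib]
    apply Finset.sum_congr rfl
    intro k _
    ring
  rw [h, hπ1]
  unfold varPi
  ring

lemma var_pos (n : ℕ) (π f : ℕ → ℝ) (hπ : ∀ i ∈ Finset.range (n + 1), 0 < π i)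
    (hπ1 : ∑ i ∈ Finset.range (n + 1), π i = 1) (hf : Nonconstant n f) : 0 < varPi n π f := by
  have h := var_shift n π f hπ1 (piMean n π f)
  have h0 : varPi n π f =
      ∑ k ∈ Finset.range (n + 1), π k * (f k - piMean n π f) ^ 2 := by
    rw [h]; ring
  have hnn : ∀ k ∈ Finset.range (n + 1), 0 ≤ π k * (f k - piMean n π f) ^ 2 :=
    fun k hk => mul_nonneg (hπ k hk).le (sq_nonneg _)
  rw [h0]
  refine lt_of_le_of_ne (Finset.sum_nonneg hnn) ?_
  intro hz
  have hall := (Finset.sum_eq_zero_iff_of_nonneg hnn).1 hz.symm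
  have key : ∀ k ∈ Finset.range (n + 1), f k = piMean n π f := by
    intro k hk
    have h3 := (mul_eq_zero.1 (hall k hk)).resolve_left (hπ k hk).ne'
    exact sub_eq_zero.1 (pow_eq_zero_iff (two_ne_zero)|>.1 h3)
  obtain ⟨a, ha, b, hb, hab⟩ := hf
  exact hab ((key a ha).trans (key b hb).symm)

lemma gap_bound (n : ℕ) (π ν : ℕ → ℝ)
    (hπ : ∀ i ∈ Finset.range (n + 1), 0 < π i)
    (hπ1 : ∑ i ∈ Finset.range (n + 1), π i = 1)
    (hν : ∀ i ∈ Finset.range n, 0 < ν i)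
    (gap : ℝ) (hgap : IsSpectralGap n π ν gap) (i : ℕ) (hi : i ≤ n) (c : ℝ) (hc : 0 ≤ c)
    (hA : c * (∑ j ∈ Finset.range i, (∑ k ∈ Finset.range (j + 1), π k) / ν j) ≤ 1)
    (hB : c * (∑ j ∈ Finset.Icc (i + 1) n, (∑ k ∈ Finset.Icc j n, π k) / ν (j - 1)) ≤ 1) :
    c ≤ gap := by
  obtain ⟨f, hf, rfl⟩ := hgap.1
  have hπ' : ∀ k ≤ n, 0 < π k := fun k hk => hπ k (Finset.mem_range.2 (by omega))
  have hν' : ∀ k < n, 0 < ν k := fun k hk => hν k (Finset.mem_range.2 hk)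
  rw [le_div_iff₀ (var_pos n π f hπ hπ1 hf)]
  have hL := left_bound π ν f i (fun k hk => hπ' k (by omega)) (fun k hk => hν' k (by omega))
  have hR := right_bound n π ν f i hπ' hν'
  have hv := var_shift n π f hπ1 (f i)
  rw [← Finset.sum_range_add_sum_Ico _ (show i + 1 ≤ n + 1 by omega),
    Finset.sum_range_succ] at hv
  have hE : EForm n ν f f =
      ∑ j ∈ Finset.range i, (f j - f (j + 1)) * (f j - f (j + 1)) * ν j +
      ∑ j ∈ Finset.Ico i n, (f j - f (j + 1)) * (f j - f (j + 1)) * ν j := by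
    unfold EForm
    rw [Finset.sum_range_add_sum_Ico _ hi]
  have hEL : 0 ≤ ∑ j ∈ Finset.range i, (f j - f (j + 1)) * (f j - f (j + 1)) * ν j :=
    Finset.sum_nonneg fun j hj =>
      mul_nonneg (mul_self_nonneg _) (hν' j ((Finset.mem_range.1 hj).trans_le hi)).le
  have hER : 0 ≤ ∑ j ∈ Finset.Ico i n, (f j - f (j + 1)) * (f j - f (j + 1)) * ν j :=
    Finset.sum_nonneg fun j hj =>
      mul_nonneg (mul_self_nonneg _) (hν' j (Finset.mem_Ico.1 hj).2).le
  rw [hE]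
  have h1 := mul_le_mul_of_nonneg_right hA hEL
  have h2 := mul_le_mul_of_nonneg_right hB hER
  have h3 := mul_le_mul_of_nonneg_left hL hc
  have h4 := mul_le_mul_of_nonneg_left hR hc
  have h5 : varPi n π f ≤ ∑ k ∈ Finset.range i, π k * (f k - f i) ^ 2 +
      ∑ k ∈ Finset.Ico (i + 1) (n + 1), π k * (f k - f i) ^ 2 := by
    have h6 := sq_nonneg (piMean n π f - f i)
    have h7 : π i * (f i - f i) ^ 2 = 0 := by simp
    linarith
  have h8 := mul_le_mul_of_nonneg_left h5 hc
  rw [mul_add] at h8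
  rw [← mul_assoc] at h3 h4
  linarith

theorem stmt15 (n : ℕ) (hn : 1 ≤ n) (π ν : ℕ → ℝ)
    (hπ : ∀ i ∈ Finset.range (n + 1), 0 < π i)
    (hπ1 : ∑ i ∈ Finset.range (n + 1), π i = 1)
    (hν : ∀ i ∈ Finset.range n, 0 < ν i)
    (gap : ℝ) (hgap : IsSpectralGap n π ν gap) :
    -- `gap ≥ max_i min{A i⁻¹, B i⁻¹}` where
    -- `A i = Σ_{j=0}^{i−1} π([0,j])/ν(j,j+1)`, `B i = Σ_{j=i+1}^n π([j,n])/ν(j−1,j)`,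
    -- and `0⁻¹ = ∞`, so that at `i = 0` only `B`, and at `i = n` only `A`, constrains.
    ∀ i ≤ n,
      (i = 0 →
        (∑ j ∈ Finset.Icc 1 n, (∑ k ∈ Finset.Icc j n, π k) / ν (j - 1))⁻¹ ≤ gap) ∧
      (i = n →
        (∑ j ∈ Finset.range n, (∑ k ∈ Finset.range (j + 1), π k) / ν j)⁻¹ ≤ gap) ∧
      (0 < i → i < n →
        min (∑ j ∈ Finset.range i, (∑ k ∈ Finset.range (j + 1), π k) / ν j)⁻¹
            (∑ j ∈ Finset.Icc (i + 1) n, (∑ k ∈ Finset.Icc j n, π k) / ν (j - 1))⁻¹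
          ≤ gap) := by
  intro i hi
  have hA0 : ∀ i ≤ n, 0 ≤ ∑ j ∈ Finset.range i, (∑ k ∈ Finset.range (j + 1), π k) / ν j := by
    intro i hi
    refine Finset.sum_nonneg fun j hj => div_nonneg (Finset.sum_nonneg fun k hk => ?_) ?_
    · simp only [Finset.mem_range] at hj hk
      exact (hπ k (Finset.mem_range.2 (by omega))).le
    · simp only [Finset.mem_range] at hj
      exact (hν j (Finset.mem_range.2 (by omega))).le
  have hB0 : ∀ i, 0 ≤ ∑ j ∈ Finset.Icc (i + 1) n, (∑ k ∈ Finset.Icc j n, π k) / ν (j - 1) := by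
    intro i
    refine Finset.sum_nonneg fun j hj => div_nonneg (Finset.sum_nonneg fun k hk => ?_) ?_
    · simp only [Finset.mem_Icc] at hk
      exact (hπ k (Finset.mem_range.2 (by omega))).le
    · simp only [Finset.mem_Icc] at hj
      exact (hν (j - 1) (Finset.mem_range.2 (by omega))).le
  have inv1 : ∀ x : ℝ, x⁻¹ * x ≤ 1 := fun x => inv_mul_le_one
  refine ⟨?_, ?_, ?_⟩
  · intro _
    refine gap_bound n π ν hπ hπ1 hν gap hgap 0 (by omega) _ (inv_nonneg.2 (hB0 0)) ?_ (inv1 _)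
    simp
  · intro _
    refine gap_bound n π ν hπ hπ1 hν gap hgap n le_rfl _ (inv_nonneg.2 (hA0 n le_rfl)) (inv1 _) ?_
    simp
  · intro _ _
    refine gap_bound n π ν hπ hπ1 hν gap hgap i hi _
      (le_min (inv_nonneg.2 (hA0 i hi)) (inv_nonneg.2 (hB0 i))) ?_ ?_
    · exact (mul_le_mul_of_nonneg_right (min_le_left _ _) (hA0 i hi)).trans (inv1 _)
    · exact (mul_le_mul_of_nonneg_right (min_le_right _ _) (hB0 i)).trans (inv1 _)
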